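/- The simultaneous self-subsumption transformation R is equivalence-preserving: for every CNF formula F and every complete assignment σ of F, F[σ] = R(F)[σ]. -/

import Mathlib

/-- A literal over a variable type `V`: a variable or its negation. -/
inductive Lit (V : Type) where
  | pos : V → Lit V
  | neg : V → Lit V
deriving DecidableEq

variable {V : Type} [DecidableEq V]

/-- Negation of a literal (so that double negation is the identity). -/
def Lit.negate : Lit V → Lit V
  | .pos v => .neg v
  | .neg v => .pos v

/-- The underlying variable of a literal. -/
def Lit.var : Lit V → V
  | .pos v => v
  | .neg v => v

/-- A clause is a finite set of literals. -/
abbrev Clause (V : Type) := Finset (Lit V)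

/-- A CNF formula is a finite set of clauses. -/
abbrev CNF (V : Type) := Finset (Clause V)

/-- `Var(F)`: the variables occurring in a formula. -/
def CNF.vars (F : CNF V) : Finset V := Finset.sup F (fun C => Finset.image Lit.var C)

/-- `Lit(F) = Var(F) ∪ {v̄ : v ∈ Var(F)}`. -/
def CNF.lits (F : CNF V) : Finset (Lit V) :=
  Finset.image Lit.pos (CNF.vars F) ∪ Finset.image Lit.neg (CNF.vars F)

/-- The value of a literal under a complete assignment (given on the variables,
which determines a consistent complete assignment on all literals). -/
def Lit.val (σ : V → Bool) : Lit V → Bool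
  | .pos v => σ v
  | .neg v => !(σ v)

/-- `C[σ]`: delete from `C` every literal mapped to `⊥` by `σ`
(i.e. keep `l` with `¬l ∉ σ`). -/
def Clause.reduce (σ : V → Bool) (C : Clause V) : Clause V :=
  Finset.filter (fun l => Lit.val σ (Lit.negate l) = false) C

/-- `F[σ]`: delete every clause containing a literal mapped to `⊤` by `σ`
(for a complete assignment: every clause containing no false literal is kept)
and delete from each remaining clause every literal mapped to `⊥`. -/
def CNF.reduce (F : CNF V) (σ : V → Bool) : CNF V :=
  Finset.image (Clause.reduce σ) (Finset.filter (fun C => ∀ l ∈ C, Lit.val σ l = false) F)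

/-- Apply a map on literals elementwise to clauses and formulas. -/
def CNF.map (φ : Lit V → Lit V) (F : CNF V) : CNF V :=
  Finset.image (fun C => Finset.image φ C) F

/-- `φ` is a syntactic symmetry of `F`: a bijection of `Lit(F)` respecting
negation with `φ(F) = F`. -/
def IsSynSym (F : CNF V) (φ : Lit V → Lit V) : Prop :=
  Set.BijOn φ (CNF.lits F : Set (Lit V)) (CNF.lits F : Set (Lit V)) ∧
  (∀ l ∈ CNF.lits F, φ (Lit.negate l) = Lit.negate (φ l)) ∧
  CNF.map φ F = F

/-- `φ` is a semantic symmetry of `F`: a bijection of `Lit(F)` respecting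
negation with `F[σ] = φ(F)[σ]` for every complete assignment `σ`. -/
def IsSemSym (F : CNF V) (φ : Lit V → Lit V) : Prop :=
  Set.BijOn φ (CNF.lits F : Set (Lit V)) (CNF.lits F : Set (Lit V)) ∧
  (∀ l ∈ CNF.lits F, φ (Lit.negate l) = Lit.negate (φ l)) ∧
  ∀ σ : V → Bool, CNF.reduce F σ = CNF.reduce (CNF.map φ F) σ

/-- Extend a map defined on the literal set `S` by the identity outside `S`. -/
def extendId (S : Finset (Lit V)) (φ : Lit V → Lit V) : Lit V → Lit V :=
  fun l => if l ∈ S then φ l else l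

/-- `F[l ↦ ⊤]`: delete every clause containing `l` and delete `l̄` from every
remaining clause. -/
def CNF.assignTrue (F : CNF V) (l : Lit V) : CNF V :=
  Finset.image (fun C => Finset.erase C (Lit.negate l)) (Finset.filter (fun C => l ∉ C) F)

/-- `f_F(C₁, C, x)` holds for some `C₁ ∈ F`: the literal `x` can be removed
from the clause `C` by self-subsuming resolution in `F`. -/
def Removable (F : CNF V) (C : Clause V) (x : Lit V) : Prop :=
  x ∈ C ∧ ∃ C₁ ∈ F, Lit.negate x ∈ C₁ ∧ C₁.erase (Lit.negate x) ⊂ C.erase x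

open Classical in
/-- `r_F(C)`: if there is exactly one literal removable from `C` by
self-subsuming resolution in `F`, remove it; otherwise leave `C` unchanged. -/
noncomputable def rFun (F : CNF V) (C : Clause V) : Clause V :=
  if h : ∃! x : Lit V, Removable F C x then C.erase h.choose else C

/-- Simultaneous self-subsumption: `R(F) = {r_F(C) : C ∈ F}`. -/
noncomputable def RFun (F : CNF V) : CNF V := Finset.image (rFun F) F

theorem aux_reduce_mem (F : CNF V) (σ : V → Bool) (D : Clause V) :
    D ∈ CNF.reduce F σ ↔ D = ∅ ∧ ∃ C ∈ F, ∀ l ∈ C, Lit.val σ l = false := by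
  have key : ∀ C : Clause V, (∀ l ∈ C, Lit.val σ l = false) → Clause.reduce σ C = ∅ := by
    intro C hC
    unfold Clause.reduce
    rw [Finset.filter_eq_empty_iff]
    intro l hl
    have := hC l hl
    cases l <;> simp_all [Lit.val, Lit.negate]
  unfold CNF.reduce
  simp only [Finset.mem_image, Finset.mem_filter]
  constructor
  · rintro ⟨C, ⟨hC, hf⟩, rfl⟩
    exact ⟨key C hf, C, hC, hf⟩
  · rintro ⟨rfl, C, hC, hf⟩
    exact ⟨C, ⟨hC, hf⟩, key C hf⟩

theorem aux_rFun_subset (F : CNF V) (C : Clause V) : rFun F C ⊆ C := by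
  unfold rFun
  split_ifs with h
  · exact Finset.erase_subset _ _
  · exact Finset.Subset.refl _

theorem aux_rFun_falsified (F : CNF V) (σ : V → Bool) (C : Clause V) (hC : C ∈ F)
    (hf : ∀ l ∈ rFun F C, Lit.val σ l = false) :
    ∃ C ∈ F, ∀ l ∈ C, Lit.val σ l = false := by
  unfold rFun at hf
  split_ifs at hf with h
  · obtain ⟨hx, C₁, hC₁, hn, hs⟩ := h.choose_spec.1
    generalize h.choose = x at *
    by_cases hv : Lit.val σ x = false
    · refine ⟨C, hC, fun l hl => ?_⟩
      by_cases hlx : l = x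
      · rw [hlx]; exact hv
      · exact hf l (Finset.mem_erase.2 ⟨hlx, hl⟩)
    · refine ⟨C₁, hC₁, fun l hl => ?_⟩
      by_cases hlx : l = Lit.negate x
      · rw [hlx]
        cases x <;> simp_all [Lit.val, Lit.negate]
      · exact hf l (hs.1 (Finset.mem_erase.2 ⟨hlx, hl⟩))
  · exact ⟨C, hC, hf⟩

/-- Simultaneous self-subsumption is equivalence-preserving:
for every CNF formula `F` and every complete assignment `σ`,
`F[σ] = R(F)[σ]`. -/
theorem simultaneous_self_subsumption_equivalence_preserving
    (F : CNF V) (σ : V → Bool) :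
    CNF.reduce F σ = CNF.reduce (RFun F) σ := by
  ext D
  rw [aux_reduce_mem, aux_reduce_mem]
  refine and_congr_right fun _ => ⟨?_, ?_⟩
  · rintro ⟨C, hC, hf⟩
    exact ⟨rFun F C, Finset.mem_image_of_mem _ hC,
      fun l hl => hf l (aux_rFun_subset F C hl)⟩
  · rintro ⟨C, hC, hf⟩
    obtain ⟨C', hC', rfl⟩ := Finset.mem_image.1 hC
    exact aux_rFun_falsified F σ C' hC' hf
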